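/- arXiv:1510.09110 — 3 statements merged into one kernel-verified Lean document; each statement's English description precedes it below -/
import Mathlib

section
/- Let x be a real number, let c > 0 and T > 0, and define X : [0,T] → ℝ by X(t) = x·sinh(c(T−t))/sinh(cT). Then X is differentiable, X(0) = x, X(T) = 0, and X satisfies the feedback ordinary differential equation X′(t) = −X(t)·c·coth(c(T−t)) for all t ∈ [0,T). -/
/-- Let `x ∈ ℝ`, `c > 0`, `T > 0`, and define
`X(t) = x·sinh(c(T−t))/sinh(cT)`. Then `X` is differentiable, `X(0) = x`,
`X(T) = 0`, and `X` satisfies the feedback ODE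
`X′(t) = −X(t)·c·coth(c(T−t))` for all `t ∈ [0,T)`
(where `coth u = cosh u / sinh u`). -/
theorem optimal_trajectory_feedback
    (x c T : ℝ) (hc : 0 < c) (hT : 0 < T)
    (X : ℝ → ℝ)
    (hX : X = fun t => x * Real.sinh (c * (T - t)) / Real.sinh (c * T)) :
    DifferentiableOn ℝ X (Set.Icc 0 T) ∧ X 0 = x ∧ X T = 0 ∧
      ∀ t ∈ Set.Ico (0 : ℝ) T,
        HasDerivAt X
          (-(X t * c * (Real.cosh (c * (T - t)) / Real.sinh (c * (T - t))))) t := by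
  have hS : Real.sinh (c * T) ≠ 0 := (Real.sinh_pos_iff.2 (mul_pos hc hT)).ne'
  have key : ∀ t, HasDerivAt X
      (x * (Real.cosh (c * (T - t)) * (c * (-1))) / Real.sinh (c * T)) t := by
    intro t
    rw [hX]
    have h1 : HasDerivAt (fun t : ℝ => c * (T - t)) (c * (-1)) t :=
      ((hasDerivAt_id t).const_sub T).const_mul c
    exact (h1.sinh.const_mul x).div_const _
  refine ⟨fun t _ => (key t).differentiableAt.differentiableWithinAt, ?_, ?_, ?_⟩
  · rw [hX]
    simp only [sub_zero]
    field_simp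
  · rw [hX]
    simp
  · intro t ht
    have hs : Real.sinh (c * (T - t)) ≠ 0 :=
      (Real.sinh_pos_iff.2 (mul_pos hc (sub_pos.2 ht.2))).ne'
    convert key t using 1
    rw [hX]
    field_simp
end

section
/- Let T > 0, let μ be a real constant, let θ, σ₁, σ₂, η : [0,T] → ℝ be continuous with η(t) > 0 for all t, and let D, E, F, G, H, I, L, M, N, O, P, Q : [0,T) → ℝ be differentiable functions satisfying on [0,T) the system: −D′ = −D²/η + μσ₁²(1+N)² + μσ₂²N²; −E′ = −2θE − F²/(4η) + 4μ(σ₁²+σ₂²)M²; −F′ = −θ − θF − DF/η + 4μσ₁²(1+N)M + 4μσ₂²MN; −G′ = −DG/η + 2μσ₁²(1+N)P + 2μσ₂²NP; −H′ = −θH − FG/(2η) + 4μ(σ₁²+σ₂²)MP; −I′ = (σ₁²+σ₂²)E − G²/(4η) + μ(σ₁²+σ₂²)P²; −L′ = D²/η − 2DL/η; −M′ = F²/(4η) − 2θM − FN/(2η); −N′ = −θ + DF/η − θN − (DN+FL)/η; −O′ = (DG − DO − GL)/η; −P′ = −θP + (FG − FO − GN)/(2η); −Q′ = G²/(4η) +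 (σ₁²+σ₂²)M − GO/(2η). Define C(x,β,t) = x²D(t) + β²E(t) + xβF(t) + xG(t) + βH(t) + I(t) and f(x,β,t) = x²L(t) + β²M(t) + xβN(t) + xO(t) + βP(t) + Q(t). Then for all x, β ∈ ℝ and t ∈ [0,T): 0 = −θxβ − C_β·θβ + (1/2)C_ββ(σ₁²+σ₂²) + C_t − C_x²/(4η) + μσ₁²(x + f_β)² + μσ₂²f_β², and 0 = −θxβ + C_x²/(4η) − f_β·θβ + (1/2)f_ββ(σ₁²+σ₂²) − C_x·f_x/(2η) + f_t. -/
/-- Quadratic ansatz `(x, β, t) ↦ x²D(t) + β²E(t) + xβF(t) + xG(t) + βH(t) + I(t)`. -/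
noncomputable def quadAnsatz (D E F G H I : ℝ → ℝ) : ℝ → ℝ → ℝ → ℝ :=
  fun x β t => x ^ 2 * D t + β ^ 2 * E t + x * β * F t + x * G t + β * H t + I t

/-- Partial derivative in the first (position) variable. -/
noncomputable def pdX (C : ℝ → ℝ → ℝ → ℝ) (x β t : ℝ) : ℝ := deriv (fun y => C y β t) x

/-- Partial derivative in the second variable. -/
noncomputable def pdB (C : ℝ → ℝ → ℝ → ℝ) (x β t : ℝ) : ℝ := deriv (fun b => C x b t) β

/-- Second partial derivative in the second variable. -/
noncomputable def pdBB (C : ℝ → ℝ → ℝ → ℝ) (x β t : ℝ) : ℝ := deriv (fun b => pdB C x b t) β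

/-- Partial derivative in the time variable. -/
noncomputable def pdT (C : ℝ → ℝ → ℝ → ℝ) (x β t : ℝ) : ℝ := deriv (fun s => C x β s) t

theorem pdX_quad (D E F G H I : ℝ → ℝ) (x β t : ℝ) :
    pdX (quadAnsatz D E F G H I) x β t = 2 * x * D t + β * F t + G t := by
  have h := ((((((hasDerivAt_id x).pow 2).mul_const (D t)).add_const (β ^ 2 * E t)).add
    (((hasDerivAt_id x).mul_const β).mul_const (F t))).add
    ((hasDerivAt_id x).mul_const (G t))).add_const (β * H t) |>.add_const (I t)
  refine (HasDerivAt.deriv (h.congr_deriv ?_))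
  simp

theorem pdB_quad (D E F G H I : ℝ → ℝ) (x β t : ℝ) :
    pdB (quadAnsatz D E F G H I) x β t = 2 * β * E t + x * F t + H t := by
  have h := ((((((hasDerivAt_id β).pow 2).mul_const (E t)).const_add (x ^ 2 * D t)).add
    (((hasDerivAt_id β).const_mul x).mul_const (F t))).add_const (x * G t)).add
    ((hasDerivAt_id β).mul_const (H t)) |>.add_const (I t)
  refine (HasDerivAt.deriv (h.congr_deriv ?_))
  simp

theorem pdBB_quad (D E F G H I : ℝ → ℝ) (x β t : ℝ) :
    pdBB (quadAnsatz D E F G H I) x β t = 2 * E t := by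
  unfold pdBB
  simp only [pdB_quad]
  have h := ((((hasDerivAt_id β).const_mul 2).mul_const (E t)).add_const
    (x * F t)).add_const (H t)
  refine (HasDerivAt.deriv (h.congr_deriv ?_))
  simp

theorem pdT_quad (D E F G H I : ℝ → ℝ) (x β t d e f g h i : ℝ)
    (hD : HasDerivAt D d t) (hE : HasDerivAt E e t) (hF : HasDerivAt F f t)
    (hG : HasDerivAt G g t) (hH : HasDerivAt H h t) (hI : HasDerivAt I i t) :
    pdT (quadAnsatz D E F G H I) x β t
      = x ^ 2 * d + β ^ 2 * e + x * β * f + x * g + β * h + i :=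
  HasDerivAt.deriv ((((((hD.const_mul (x ^ 2)).add (hE.const_mul (β ^ 2))).add
    (hF.const_mul (x * β))).add (hG.const_mul x)).add (hH.const_mul β)).add hI)

/-- In the random-pricing-signal model, if the coefficient
functions `D, …, Q` solve the displayed ODE system on `[0,T)`, then the
quadratic ansätze `C` and `f` solve the two coupled HJB-type PDEs for all
`x, β ∈ ℝ` and `t ∈ [0,T)`. -/
theorem signal_ODE_system_implies_HJB
    (T μ : ℝ) (hT : 0 < T)
    (θ σ₁ σ₂ η : ℝ → ℝ)
    (hθ : ContinuousOn θ (Set.Icc 0 T)) (hσ₁ : ContinuousOn σ₁ (Set.Icc 0 T))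
    (hσ₂ : ContinuousOn σ₂ (Set.Icc 0 T)) (hη : ContinuousOn η (Set.Icc 0 T))
    (hηpos : ∀ t ∈ Set.Icc (0 : ℝ) T, 0 < η t)
    (D E F G H I L M N O P Q D' E' F' G' H' I' L' M' N' O' P' Q' : ℝ → ℝ)
    (hD : ∀ t ∈ Set.Ico (0 : ℝ) T, HasDerivAt D (D' t) t)
    (hE : ∀ t ∈ Set.Ico (0 : ℝ) T, HasDerivAt E (E' t) t)
    (hF : ∀ t ∈ Set.Ico (0 : ℝ) T, HasDerivAt F (F' t) t)
    (hG : ∀ t ∈ Set.Ico (0 : ℝ) T, HasDerivAt G (G' t) t)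
    (hH : ∀ t ∈ Set.Ico (0 : ℝ) T, HasDerivAt H (H' t) t)
    (hI : ∀ t ∈ Set.Ico (0 : ℝ) T, HasDerivAt I (I' t) t)
    (hL : ∀ t ∈ Set.Ico (0 : ℝ) T, HasDerivAt L (L' t) t)
    (hM : ∀ t ∈ Set.Ico (0 : ℝ) T, HasDerivAt M (M' t) t)
    (hN : ∀ t ∈ Set.Ico (0 : ℝ) T, HasDerivAt N (N' t) t)
    (hO : ∀ t ∈ Set.Ico (0 : ℝ) T, HasDerivAt O (O' t) t)
    (hP : ∀ t ∈ Set.Ico (0 : ℝ) T, HasDerivAt P (P' t) t)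
    (hQ : ∀ t ∈ Set.Ico (0 : ℝ) T, HasDerivAt Q (Q' t) t)
    (hsys : ∀ t ∈ Set.Ico (0 : ℝ) T,
      (-D' t = -(D t) ^ 2 / η t + μ * (σ₁ t) ^ 2 * (1 + N t) ^ 2
          + μ * (σ₂ t) ^ 2 * (N t) ^ 2) ∧
      (-E' t = -2 * θ t * E t - (F t) ^ 2 / (4 * η t)
          + 4 * μ * ((σ₁ t) ^ 2 + (σ₂ t) ^ 2) * (M t) ^ 2) ∧
      (-F' t = -θ t - θ t * F t - D t * F t / η t
          + 4 * μ * (σ₁ t) ^ 2 * (1 + N t) * M t + 4 * μ * (σ₂ t) ^ 2 * M t * N t) ∧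
      (-G' t = -D t * G t / η t + 2 * μ * (σ₁ t) ^ 2 * (1 + N t) * P t
          + 2 * μ * (σ₂ t) ^ 2 * N t * P t) ∧
      (-H' t = -θ t * H t - F t * G t / (2 * η t)
          + 4 * μ * ((σ₁ t) ^ 2 + (σ₂ t) ^ 2) * M t * P t) ∧
      (-I' t = ((σ₁ t) ^ 2 + (σ₂ t) ^ 2) * E t - (G t) ^ 2 / (4 * η t)
          + μ * ((σ₁ t) ^ 2 + (σ₂ t) ^ 2) * (P t) ^ 2) ∧
      (-L' t = (D t) ^ 2 / η t - 2 * D t * L t / η t) ∧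
      (-M' t = (F t) ^ 2 / (4 * η t) - 2 * θ t * M t - F t * N t / (2 * η t)) ∧
      (-N' t = -θ t + D t * F t / η t - θ t * N t
          - (D t * N t + F t * L t) / η t) ∧
      (-O' t = (D t * G t - D t * O t - G t * L t) / η t) ∧
      (-P' t = -θ t * P t + (F t * G t - F t * O t - G t * N t) / (2 * η t)) ∧
      (-Q' t = (G t) ^ 2 / (4 * η t) + ((σ₁ t) ^ 2 + (σ₂ t) ^ 2) * M t
          - G t * O t / (2 * η t))) :
    ∀ (x β : ℝ), ∀ t ∈ Set.Ico (0 : ℝ) T,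
      (0 = -θ t * x * β
          - pdB (quadAnsatz D E F G H I) x β t * θ t * β
          + (1 / 2) * pdBB (quadAnsatz D E F G H I) x β t * ((σ₁ t) ^ 2 + (σ₂ t) ^ 2)
          + pdT (quadAnsatz D E F G H I) x β t
          - (pdX (quadAnsatz D E F G H I) x β t) ^ 2 / (4 * η t)
          + μ * (σ₁ t) ^ 2 * (x + pdB (quadAnsatz L M N O P Q) x β t) ^ 2
          + μ * (σ₂ t) ^ 2 * (pdB (quadAnsatz L M N O P Q) x β t) ^ 2) ∧
      (0 = -θ t * x * β
          + (pdX (quadAnsatz D E F G H I) x β t) ^ 2 / (4 * η t)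
          - pdB (quadAnsatz L M N O P Q) x β t * θ t * β
          + (1 / 2) * pdBB (quadAnsatz L M N O P Q) x β t * ((σ₁ t) ^ 2 + (σ₂ t) ^ 2)
          - pdX (quadAnsatz D E F G H I) x β t * pdX (quadAnsatz L M N O P Q) x β t
              / (2 * η t)
          + pdT (quadAnsatz L M N O P Q) x β t) := by
  intro x β t ht
  obtain ⟨h1, h2, h3, h4, h5, h6, h7, h8, h9, h10, h11, h12⟩ := hsys t ht
  have hη0 : η t ≠ 0 := (hηpos t ⟨ht.1, ht.2.le⟩).ne'
  rw [pdT_quad D E F G H I x β t _ _ _ _ _ _ (hD t ht) (hE t ht) (hF t ht) (hG t ht)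
    (hH t ht) (hI t ht), pdT_quad L M N O P Q x β t _ _ _ _ _ _ (hL t ht) (hM t ht)
    (hN t ht) (hO t ht) (hP t ht) (hQ t ht)]
  simp only [pdX_quad, pdB_quad, pdBB_quad]
  constructor
  · linear_combination x ^ 2 * h1 + β ^ 2 * h2 + x * β * h3 + x * h4 + β * h5 + h6
  · linear_combination x ^ 2 * h7 + β ^ 2 * h8 + x * β * h9 + x * h10 + β * h11 + h12
end

section
/- Let μ, σ, η, T be positive real constants, set c := √(μσ²/η), and define C : ℝ × [0,T) → ℝ by C(x,t) = x²·√(μησ²)·coth(c(T−t)). Then C satisfies the HJB equation 0 = μσ²x² + ∂C/∂t(x,t) − (∂C/∂x(x,t))²/(4η) for all x ∈ ℝ and t ∈ [0,T), and for every x ∈ ℝ, (T−t)·C(x,t) → η·x² as t → T⁻. -/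
/-- Let μ, σ, η, T be positive constants, `c := √(μσ²/η)`, and
`C(x,t) = x²·√(μησ²)·coth(c(T−t))` (with `coth u = cosh u / sinh u`). Then
`C` satisfies the HJB equation `0 = μσ²x² + C_t − C_x²/(4η)` for all `x ∈ ℝ`
and `t ∈ [0,T)`, and for every `x`, `(T−t)·C(x,t) → η·x²` as `t → T⁻`. -/
theorem basic_model_value_function
    (μ σ η T : ℝ) (hμ : 0 < μ) (hσ : 0 < σ) (hη : 0 < η) (hT : 0 < T)
    (c : ℝ) (hc : c = Real.sqrt (μ * σ ^ 2 / η))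
    (C : ℝ → ℝ → ℝ)
    (hC : C = fun x t => x ^ 2 * (Real.sqrt (μ * η * σ ^ 2) *
      (Real.cosh (c * (T - t)) / Real.sinh (c * (T - t))))) :
    (∀ x : ℝ, ∀ t ∈ Set.Ico (0 : ℝ) T,
        0 = μ * σ ^ 2 * x ^ 2 + deriv (fun s => C x s) t
            - (deriv (fun y => C y t) x) ^ 2 / (4 * η)) ∧
      ∀ x : ℝ, Filter.Tendsto (fun t => (T - t) * C x t)
        (nhdsWithin T (Set.Iio T)) (nhds (η * x ^ 2)) := by
  have hcpos : 0 < c := by rw [hc]; positivity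
  have hc2 : η * c ^ 2 = μ * σ ^ 2 := by
    rw [hc, Real.sq_sqrt (by positivity)]; field_simp
  have hK : Real.sqrt (μ * η * σ ^ 2) = η * c := by
    rw [show μ * η * σ ^ 2 = (η * c) ^ 2 by linear_combination (-η) * hc2]
    exact Real.sqrt_sq (by positivity)
  rw [hK] at hC
  subst hC
  have hlin : ∀ t : ℝ, HasDerivAt (fun s => c * (T - s)) (-c) t := by
    intro t
    simpa using ((hasDerivAt_id t).const_sub T).const_mul c
  refine ⟨?_, ?_⟩
  · intro x t ht
    have hs : Real.sinh (c * (T - t)) ≠ 0 :=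
      (Real.sinh_pos_iff.2 (mul_pos hcpos (sub_pos.2 ht.2))).ne'
    have h1 := ((((hlin t).cosh).div ((hlin t).sinh) hs).const_mul (η * c)).const_mul (x ^ 2)
    have h2 := ((hasDerivAt_pow 2 x).mul_const
      (η * c * (Real.cosh (c * (T - t)) / Real.sinh (c * (T - t)))))
    have e1 := h1.deriv
    have e2 := h2.deriv
    simp only [Pi.div_apply] at e1
    rw [e1, e2, ← hc2]
    have hcs := Real.cosh_sq (c * (T - t))
    field_simp
    ring_nf
  · intro x
    have hslope : Filter.Tendsto (slope (fun s => Real.sinh (c * (T - s))) T)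
        (nhdsWithin T (Set.Iio T)) (nhds (-c)) := by
      have h := (hlin T).sinh
      simp only [sub_self, mul_zero, Real.cosh_zero, one_mul] at h
      exact (hasDerivAt_iff_tendsto_slope.1 h).mono_left
        (nhdsWithin_mono _ (fun y hy => ne_of_lt hy))
    have hinv := hslope.inv₀ (neg_ne_zero.2 hcpos.ne')
    have hcosh : Filter.Tendsto (fun t => Real.cosh (c * (T - t)))
        (nhdsWithin T (Set.Iio T)) (nhds 1) := by
      have h : Continuous (fun t => Real.cosh (c * (T - t))) := by fun_prop
      have h' := h.tendsto T
      simp only [sub_self, mul_zero, Real.cosh_zero] at h'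
      exact h'.mono_left nhdsWithin_le_nhds
    have hfin := (hinv.mul hcosh).const_mul (-(x ^ 2 * (η * c)))
    have e : -(x ^ 2 * (η * c)) * ((-c)⁻¹ * 1) = η * x ^ 2 := by
      field_simp
    rw [e] at hfin
    refine hfin.congr (fun t => ?_)
    simp only [slope_def_field, sub_self, mul_zero, Real.sinh_zero, sub_zero, inv_div]
    ring
end
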